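/- arXiv:2007.09591 — 2 statements merged into one kernel-verified Lean document; each statement's English description precedes it below -/
import Mathlib

section
/- Let l₁ = (3/5, 4/5), l₂ = (1, 0), and let R₁^o, R₂^o be the Fourier multipliers on 𝕋² with symbols 25(k₂² − k₁²)/(12|k|²) and 7(k₂² − k₁²)/(12|k|²) + 4k₁k₂/|k|². Let C₀ ≥ 2 be a constant, let q ∈ C₀^∞(𝕋²), and let r > 0, λ > 0 be such that ‖R_j^o q‖_∞ ≤ r for j = 1, 2. Define a_j = 2 √(r/(5λ)) √(C₀ + R_j^o(q)/r) for j = 1, 2 (the functions under the square root are ≥ 1, so a_j ∈ C^∞(𝕋²)). Then there exists a smooth scalar p on 𝕋² such that −(1/4)·(5λ)·∑_{j=1}^{2} l_j^⊥ (l_j·∇)(a_j²) + ∇q = ∇^⊥ p, where l^⊥ = (−b,a) for l = (a,b) and ∇^⊥ = (−∂₂, ∂₁). -/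
open MeasureTheory Complex Filter

noncomputable section

abbrev Z2 := ℤ × ℤ

/-- dot product of an integer frequency with a point of `ℝ²` -/
def dotZ (k : Z2) (x : ℝ × ℝ) : ℝ := (k.1 : ℝ) * x.1 + (k.2 : ℝ) * x.2

/-- Euclidean norm of an integer frequency -/
def knorm (k : Z2) : ℝ := Real.sqrt ((k.1 : ℝ) ^ 2 + (k.2 : ℝ) ^ 2)

/-- Euclidean norm on `ℝ²` (realized as `ℝ × ℝ`) -/
def e2 (x : ℝ × ℝ) : ℝ := Real.sqrt (x.1 ^ 2 + x.2 ^ 2)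

/-- the fundamental domain `[-π, π]²` of the torus -/
def Q2 : Set (ℝ × ℝ) := Set.Icc (-Real.pi, -Real.pi) (Real.pi, Real.pi)

/-- `2π`-periodicity in both variables -/
def Periodic2 (f : ℝ × ℝ → ℂ) : Prop :=
  ∀ x : ℝ × ℝ, f (x.1 + 2 * Real.pi, x.2) = f x ∧ f (x.1, x.2 + 2 * Real.pi) = f x

def RealValued (f : ℝ × ℝ → ℂ) : Prop := ∀ x, (f x).im = 0

/-- Fourier coefficient `f̂(k) = (2π)⁻² ∫_{𝕋²} f(x) e^{-ik⋅x} dx` -/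
def fCoeff (f : ℝ × ℝ → ℂ) (k : Z2) : ℂ :=
  (1 / (2 * Real.pi) ^ 2 : ℂ) * ∫ x in Q2, f x * Complex.exp (-Complex.I * (dotZ k x : ℝ))

/-- Fourier multiplier operator with symbol `m` -/
def Tmult (m : Z2 → ℂ) (f : ℝ × ℝ → ℂ) : ℝ × ℝ → ℂ :=
  fun x => ∑' k : Z2, m k * fCoeff f k * Complex.exp (Complex.I * (dotZ k x : ℝ))

/-- `Λ^s = (-Δ)^{s/2}`, the multiplier with symbol `|k|^s` (killing `k = 0` for `s ≤ 0`) -/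
def Lam (s : ℝ) : (ℝ × ℝ → ℂ) → (ℝ × ℝ → ℂ) :=
  Tmult fun k => if k = 0 then 0 else ((knorm k ^ s : ℝ) : ℂ)

/-- symbol of the Riesz transform `R_j`, `i k_j / |k|` -/
def rieszSym (j : Fin 2) (k : Z2) : ℂ :=
  if k = 0 then 0
  else Complex.I * ((if j = 0 then (k.1 : ℝ) else (k.2 : ℝ)) : ℂ) / ((knorm k : ℝ) : ℂ)

/-- the Riesz transform `R_j` -/
def Riesz (j : Fin 2) : (ℝ × ℝ → ℂ) → (ℝ × ℝ → ℂ) := Tmult (rieszSym j)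

/-- symbol of the modified Riesz-type transforms `R_j^o` of Lemma 2.2 -/
def RoSym (j : Fin 2) (k : Z2) : ℝ :=
  if k = 0 then 0
  else if j = 0 then 25 * ((k.2 : ℝ) ^ 2 - (k.1 : ℝ) ^ 2) / (12 * ((k.1 : ℝ) ^ 2 + (k.2 : ℝ) ^ 2))
  else 7 * ((k.2 : ℝ) ^ 2 - (k.1 : ℝ) ^ 2) / (12 * ((k.1 : ℝ) ^ 2 + (k.2 : ℝ) ^ 2))
      + 4 * (k.1 : ℝ) * (k.2 : ℝ) / ((k.1 : ℝ) ^ 2 + (k.2 : ℝ) ^ 2)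

/-- the Riesz-type transforms `R_j^o` -/
def Ro (j : Fin 2) : (ℝ × ℝ → ℂ) → (ℝ × ℝ → ℂ) := Tmult fun k => ((RoSym j k : ℝ) : ℂ)

/-- symbol of `Δ⁻¹` (mean annihilated) -/
def deltaInvSym (k : Z2) : ℂ := if k = 0 then 0 else -1 / ((knorm k ^ 2 : ℝ) : ℂ)

/-- directional derivative `(v ⋅ ∇) f` -/
def dirD (v : ℝ × ℝ) (f : ℝ × ℝ → ℂ) : ℝ × ℝ → ℂ := fun x => fderiv ℝ f x v

/-- partial derivative `∂_j f` -/
def pd (j : Fin 2) (f : ℝ × ℝ → ℂ) : ℝ × ℝ → ℂ :=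
  dirD (if j = 0 then ((1 : ℝ), (0 : ℝ)) else ((0 : ℝ), (1 : ℝ))) f

/-- sup norm on the torus -/
def supNorm (f : ℝ × ℝ → ℂ) : ℝ := ⨆ x : ℝ × ℝ, ‖f x‖

/-- the `X`-norm `‖q‖_X = ‖q‖_∞ + ‖R₁^o q‖_∞ + ‖R₂^o q‖_∞` -/
def Xnorm (q : ℝ × ℝ → ℂ) : ℝ := supNorm q + supNorm (Ro 0 q) + supNorm (Ro 1 q)

/-- the vectors `l₁ = (3/5, 4/5)` and `l₂ = (1,0)` -/
def l1 : ℝ × ℝ := (3 / 5, 4 / 5)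
def l2 : ℝ × ℝ := (1, 0)

/-- the rotation `l ↦ l^⊥` -/
def perp (l : ℝ × ℝ) : ℝ × ℝ := (-l.2, l.1)

/-- symbol view of frequencies as real vectors -/
def toR (k : Z2) : ℝ × ℝ := ((k.1 : ℝ), (k.2 : ℝ))

/-- the operator `T^{(1)}_{λl}` (where `κ = λl ∈ ℤ²`) -/
def T1op (κ : Z2) (lam : ℝ) : (ℝ × ℝ → ℂ) → (ℝ × ℝ → ℂ) :=
  Tmult fun k => (((knorm (κ + k) + knorm (κ - k)) / 2 - lam : ℝ) : ℂ)

/-- the operator `T^{(2)}_{λl}` (where `κ = λl ∈ ℤ²`) -/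
def T2op (κ : Z2) (l : ℝ × ℝ) : (ℝ × ℝ → ℂ) → (ℝ × ℝ → ℂ) :=
  Tmult fun k =>
    Complex.I * (((knorm (κ + k) - knorm (κ - k)) / 2 - (l.1 * (k.1 : ℝ) + l.2 * (k.2 : ℝ)) : ℝ) : ℂ)

/-- the functions `a_j = 2 √(r/den) √(C₀ + R_j^o q / r)` -/
def aPerf (q : ℝ × ℝ → ℂ) (r den C₀ : ℝ) (j : Fin 2) : ℝ × ℝ → ℂ :=
  fun x => ((2 * Real.sqrt (r / den) * Real.sqrt (C₀ + (Ro j q x).re / r) : ℝ) : ℂ)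

/-- `λ_n = ⌈λ₀^{bⁿ}⌉` -/
def lamSeq (lam0 : ℕ) (b : ℝ) (n : ℕ) : ℕ := ⌈((lam0 : ℝ)) ^ (b ^ n)⌉₊

/-- `r_n = λ_n^{-β}` -/
def rSeq (lam0 : ℕ) (b β : ℝ) (n : ℕ) : ℝ := ((lamSeq lam0 b n : ℝ)) ^ (-β)

/-- `μ_{n+1} = (λ_n λ_{n+1})^{1/2}` -/
def muSeq (lam0 : ℕ) (b : ℝ) (n : ℕ) : ℝ :=
  Real.sqrt ((lamSeq lam0 b n : ℝ) * (lamSeq lam0 b (n + 1) : ℝ))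

/-- smooth Fourier cutoff `P_{≤μ}` associated to a bump `ψ` -/
def Pcut (ψ : ℝ × ℝ → ℝ) (μ : ℝ) : (ℝ × ℝ → ℂ) → (ℝ × ℝ → ℂ) :=
  Tmult fun k => ((ψ ((k.1 : ℝ) / μ, (k.2 : ℝ) / μ) : ℝ) : ℂ)

/-- bilinear multiplier with symbol the Fourier transform of a kernel `K ∈ L¹(ℝ²×ℝ²)` -/
def mOf (K : (ℝ × ℝ) × (ℝ × ℝ) → ℂ) (ξ η : ℝ × ℝ) : ℂ :=
  ∫ z : (ℝ × ℝ) × (ℝ × ℝ),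
    K z * Complex.exp (-Complex.I * ((ξ.1 * z.1.1 + ξ.2 * z.1.2 + η.1 * z.2.1 + η.2 * z.2.2 : ℝ) : ℂ))

/-- the bilinear multiplier operator associated to a kernel `K ∈ L¹(ℝ²×ℝ²)` -/
def Tbil (K : (ℝ × ℝ) × (ℝ × ℝ) → ℂ) (f g : ℝ × ℝ → ℂ) : ℝ × ℝ → ℂ :=
  fun x => ∑' k : Z2,
    (∑' k' : Z2, mOf K (toR k') (toR (k - k')) * fCoeff f k' * fCoeff g (k - k'))
      * Complex.exp (Complex.I * (dotZ k x : ℝ))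

/-- Fourier coefficients of the commutator `[R_j, φ]θ`, computed from those of `φ` and `θ` -/
def commCoeff (j : Fin 2) (φh c : Z2 → ℂ) (k : Z2) : ℂ :=
  ∑' k' : Z2, (rieszSym j k - rieszSym j k') * φh (k - k') * c k'


lemma hs_congr {ι : Type*} {f g : ι → ℂ} {a : ℂ} (h : ∀ k, f k = g k) :
    HasSum f a ↔ HasSum g a := by
  rw [funext h]

def wt (k : Z2) : ℝ := (1 + (k.1 : ℝ) ^ 2) * (1 + (k.2 : ℝ) ^ 2)

lemma wt_ge_one (k : Z2) : 1 ≤ wt k := by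
  unfold wt; nlinarith [sq_nonneg (k.1 : ℝ), sq_nonneg (k.2 : ℝ), mul_nonneg (sq_nonneg (k.1 : ℝ)) (sq_nonneg (k.2 : ℝ))]

lemma abs1_le_wt (k : Z2) : |(k.1 : ℝ)| ≤ wt k := by
  unfold wt
  rw [abs_le]
  constructor <;>
  nlinarith [sq_nonneg ((k.1 : ℝ) - 1), sq_nonneg ((k.1 : ℝ) + 1), sq_nonneg (k.2 : ℝ), mul_nonneg (sq_nonneg (k.1 : ℝ)) (sq_nonneg (k.2 : ℝ))]

lemma abs2_le_wt (k : Z2) : |(k.2 : ℝ)| ≤ wt k := by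
  unfold wt
  rw [abs_le]
  constructor <;>
  nlinarith [sq_nonneg ((k.2 : ℝ) - 1), sq_nonneg ((k.2 : ℝ) + 1), sq_nonneg (k.1 : ℝ), mul_nonneg (sq_nonneg (k.1 : ℝ)) (sq_nonneg (k.2 : ℝ))]

lemma summable_inv_one_add_sq : Summable (fun n : ℤ => (1 + (n : ℝ) ^ 2)⁻¹) := by
  have h1 : Summable (fun n : ℤ => 1 / (n : ℝ) ^ 2) := Real.summable_one_div_int_pow.mpr (by norm_num)
  have h2 : Summable (fun n : ℤ => if n = 0 then (1 : ℝ) else 0) :=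
    summable_of_ne_finset_zero (s := {0}) (by intro b hb; simp at hb; simp [hb])
  refine Summable.of_nonneg_of_le (fun n => by positivity) (fun n => ?_) (h1.add h2)
  by_cases hn : n = 0
  · simp [hn]
  · have : (0 : ℝ) < (n : ℝ) ^ 2 := by positivity
    simp only [hn, if_false, add_zero, one_div]
    gcongr
    linarith

lemma summable_inv_wt : Summable (fun k : Z2 => (wt k)⁻¹) := by
  have := summable_inv_one_add_sq.mul_of_nonneg summable_inv_one_add_sq
    (fun n => by positivity) (fun n => by positivity)
  refine this.congr fun k => ?_
  simp only [wt, mul_inv]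

/-- rapidly decaying coefficients -/
def Rapid (c : Z2 → ℂ) : Prop := ∀ n : ℕ, Summable (fun k => wt k ^ n * ‖c k‖)

lemma Rapid.mul_bdd {c : Z2 → ℂ} (hc : Rapid c) (m : Z2 → ℂ) (M : ℝ) (d : ℕ)
    (hm : ∀ k, ‖m k‖ ≤ M * wt k ^ d) : Rapid (fun k => m k * c k) := by
  intro n
  refine Summable.of_nonneg_of_le (fun k => ?_) (fun k => ?_) ((hc (n + d)).mul_left M)
  · have := wt_ge_one k
    positivity
  · have := wt_ge_one k
    rw [norm_mul]
    calc wt k ^ n * (‖m k‖ * ‖c k‖) ≤ wt k ^ n * ((M * wt k ^ d) * ‖c k‖) := by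
          gcongr; exact hm k
      _ = _ := by ring

lemma norm_ex (k : Z2) (x : ℝ × ℝ) : ‖Complex.exp (Complex.I * (dotZ k x : ℝ))‖ = 1 := by
  rw [mul_comm]; exact Complex.norm_exp_ofReal_mul_I _

/-- Fourier series with coefficients `c` -/
def FS (c : Z2 → ℂ) : ℝ × ℝ → ℂ :=
  fun x => ∑' k : Z2, c k * Complex.exp (Complex.I * (dotZ k x : ℝ))

lemma Rapid.summable {c : Z2 → ℂ} (hc : Rapid c) (x : ℝ × ℝ) :
    Summable (fun k => c k * Complex.exp (Complex.I * (dotZ k x : ℝ))) := by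
  refine Summable.of_norm ((hc 0).congr fun k => ?_)
  rw [norm_mul, norm_ex]; simp

/-- the linear functional `x ↦ k ⋅ x` -/
def dotL (k : Z2) : ℝ × ℝ →L[ℝ] ℝ :=
  (k.1 : ℝ) • ContinuousLinearMap.fst ℝ ℝ ℝ + (k.2 : ℝ) • ContinuousLinearMap.snd ℝ ℝ ℝ

lemma dotL_apply (k : Z2) (x : ℝ × ℝ) : dotL k x = dotZ k x := by
  simp [dotL, dotZ]

lemma hasFDerivAt_ex (k : Z2) (x : ℝ × ℝ) :
    HasFDerivAt (fun x => Complex.exp (Complex.I * (dotZ k x : ℝ)))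
      (Complex.exp (Complex.I * (dotZ k x : ℝ)) • (Complex.I • (Complex.ofRealCLM.comp (dotL k)))) x := by
  have h0 : HasFDerivAt (fun x : ℝ × ℝ => ((dotZ k x : ℝ) : ℂ)) (Complex.ofRealCLM.comp (dotL k)) x := by
    have := (Complex.ofRealCLM.comp (dotL k)).hasFDerivAt (x := x)
    refine this.congr_of_eventuallyEq (Filter.Eventually.of_forall fun y => ?_)
    simp [dotL_apply]
  exact (h0.const_mul Complex.I).cexp

lemma norm_dotL (k : Z2) : ‖dotL k‖ ≤ 2 * wt k := by
  refine ContinuousLinearMap.opNorm_le_bound _ (by linarith [wt_ge_one k]) fun x => ?_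
  rw [dotL_apply, dotZ]
  have h1 : ‖x.1‖ ≤ ‖x‖ := norm_fst_le x
  have h2 : ‖x.2‖ ≤ ‖x‖ := norm_snd_le x
  have := wt_ge_one k
  calc ‖(k.1 : ℝ) * x.1 + (k.2 : ℝ) * x.2‖ ≤ ‖(k.1 : ℝ)‖ * ‖x.1‖ + ‖(k.2 : ℝ)‖ * ‖x.2‖ := by
        rw [← norm_mul, ← norm_mul]; exact norm_add_le _ _
    _ ≤ wt k * ‖x‖ + wt k * ‖x‖ := by
        gcongr
        · exact abs1_le_wt k
        · exact abs2_le_wt k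
    _ = _ := by ring

lemma norm_ofReal_comp (k : Z2) : ‖Complex.ofRealCLM.comp (dotL k)‖ ≤ 2 * wt k := by
  refine (ContinuousLinearMap.opNorm_comp_le _ _).trans ?_
  rw [Complex.ofRealCLM_norm, one_mul]
  exact norm_dotL k

lemma Rapid.fderiv_aux {c : Z2 → ℂ} (hc : Rapid c) (x : ℝ × ℝ) :
    HasFDerivAt (FS c) (∑' k, c k • (Complex.exp (Complex.I * (dotZ k x : ℝ)) •
      (Complex.I • (Complex.ofRealCLM.comp (dotL k))))) x ∧
    Summable (fun k => c k • (Complex.exp (Complex.I * (dotZ k x : ℝ)) •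
      (Complex.I • (Complex.ofRealCLM.comp (dotL k))))) := by
  have hu : Summable (fun k => 2 * (wt k ^ 1 * ‖c k‖)) := (hc 1).mul_left 2
  have hb : ∀ k x, ‖c k • (Complex.exp (Complex.I * (dotZ k x : ℝ)) •
      (Complex.I • (Complex.ofRealCLM.comp (dotL k))))‖ ≤ 2 * (wt k ^ 1 * ‖c k‖) := by
    intro k x
    rw [norm_smul, norm_smul, norm_smul, norm_ex, Complex.norm_I, one_mul, one_mul]
    calc _ ≤ ‖c k‖ * (2 * wt k) := by gcongr; exact norm_ofReal_comp k
      _ = _ := by ring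
  constructor
  · exact hasFDerivAt_tsum hu (fun k x => (hasFDerivAt_ex k x).const_mul (c k)) hb
      (hc.summable 0) x
  · exact Summable.of_norm_bounded hu (fun k => hb k x)

lemma Rapid.hasSum_dirD {c : Z2 → ℂ} (hc : Rapid c) (v x : ℝ × ℝ) :
    HasSum (fun k => (Complex.I * (dotZ k v : ℝ)) * c k * Complex.exp (Complex.I * (dotZ k x : ℝ)))
      (dirD v (FS c) x) := by
  obtain ⟨h1, h2⟩ := hc.fderiv_aux x
  rw [dirD, h1.fderiv]
  have := h2.hasSum.mapL (ContinuousLinearMap.apply ℝ ℂ v)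
  refine (hs_congr fun k => ?_).mp this
  simp [dotL_apply]
  ring

lemma Rapid.dir {c : Z2 → ℂ} (hc : Rapid c) (v : ℝ × ℝ) :
    Rapid (fun k => (Complex.I * (dotZ k v : ℝ)) * c k) := by
  refine hc.mul_bdd _ (2 * ‖v‖) 1 fun k => ?_
  rw [norm_mul, Complex.norm_I, one_mul, Complex.norm_real, ← dotL_apply]
  calc _ ≤ ‖dotL k‖ * ‖v‖ := ContinuousLinearMap.le_opNorm _ _
    _ ≤ (2 * wt k) * ‖v‖ := by gcongr; exact norm_dotL k
    _ = _ := by ring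

lemma Rapid.dirD_eq {c : Z2 → ℂ} (hc : Rapid c) (v : ℝ × ℝ) :
    dirD v (FS c) = FS (fun k => (Complex.I * (dotZ k v : ℝ)) * c k) := by
  funext x
  exact (hc.hasSum_dirD v x).tsum_eq.symm

lemma Rapid.contDiff_nat (n : ℕ) : ∀ {c : Z2 → ℂ} (_ : Rapid c), ContDiff ℝ n (FS c) := by
  induction n with
  | zero =>
    intro c hc
    have : Differentiable ℝ (FS c) := fun x => (hc.fderiv_aux x).1.differentiableAt
    exact contDiff_zero.mpr this.continuous
  | succ n ih =>
    intro c hc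
    have : Differentiable ℝ (FS c) := fun x => (hc.fderiv_aux x).1.differentiableAt
    rw [show ((n + 1 : ℕ) : WithTop ℕ∞) = (n : WithTop ℕ∞) + 1 by push_cast; rfl,
      contDiff_succ_iff_fderiv_apply]
    refine ⟨this, by simp, fun v => ?_⟩
    change ContDiff ℝ n (dirD v (FS c))
    rw [hc.dirD_eq]
    exact ih (hc.dir v)

lemma Rapid.contDiff {c : Z2 → ℂ} (hc : Rapid c) : ContDiff ℝ (⊤ : ℕ∞) (FS c) :=
  contDiff_infty.mpr fun n => Rapid.contDiff_nat n hc

lemma ex_per1 (k : Z2) (x : ℝ × ℝ) : Complex.exp (Complex.I * (dotZ k (x.1 + 2 * Real.pi, x.2) : ℝ))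
    = Complex.exp (Complex.I * (dotZ k x : ℝ)) := by
  rw [Complex.exp_eq_exp_iff_exists_int]
  exact ⟨k.1, by simp only [dotZ]; push_cast; ring⟩

lemma ex_per2 (k : Z2) (x : ℝ × ℝ) : Complex.exp (Complex.I * (dotZ k (x.1, x.2 + 2 * Real.pi) : ℝ))
    = Complex.exp (Complex.I * (dotZ k x : ℝ)) := by
  rw [Complex.exp_eq_exp_iff_exists_int]
  exact ⟨k.2, by simp only [dotZ]; push_cast; ring⟩

lemma FS_periodic (c : Z2 → ℂ) : Periodic2 (FS c) := by
  intro x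
  constructor
  · simp only [FS, ex_per1]
  · simp only [FS, ex_per2]

/-- the negative exponential -/
lemma nex_eq (k : Z2) (x : ℝ × ℝ) : Complex.exp (-Complex.I * (dotZ k x : ℝ))
    = Complex.exp (Complex.I * (dotZ (-k) x : ℝ)) := by
  congr 1; simp only [dotZ, Prod.fst_neg, Prod.snd_neg]; push_cast; ring

lemma contDiff_ex (k : Z2) : ContDiff ℝ (⊤ : ℕ∞) (fun x => Complex.exp (Complex.I * (dotZ k x : ℝ))) := by
  simp only [← dotL_apply]
  exact ContDiff.cexp (contDiff_const.mul (Complex.ofRealCLM.contDiff.comp (dotL k).contDiff))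

lemma integral_pd_zero (j : Fin 2) (g : ℝ × ℝ → ℂ) (hg : ContDiff ℝ (⊤ : ℕ∞) g) (hp : Periodic2 g) :
    ∫ x in Q2, pd j g x = 0 := by
  have hd : ∀ x, HasFDerivAt g (fderiv ℝ g x) x := fun x =>
    (hg.differentiable (by simp) x).hasFDerivAt
  have hc : Continuous (fderiv ℝ g) := hg.continuous_fderiv (by simp)
  have hle : ((-Real.pi, -Real.pi) : ℝ × ℝ) ≤ (Real.pi, Real.pi) := by
    constructor <;> simp <;> linarith [Real.pi_pos]
  have hp1 : ∀ y, g (Real.pi, y) = g (-Real.pi, y) := fun y => by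
    rw [← (hp (-Real.pi, y)).1]; congr 2; ring
  have hp2 : ∀ y, g (y, Real.pi) = g (y, -Real.pi) := fun y => by
    rw [← (hp (y, -Real.pi)).2]; congr 2; ring
  unfold Q2 pd dirD
  fin_cases j
  · have := integral_divergence_prod_Icc_of_hasFDerivAt_of_le g (fun _ => 0) (fderiv ℝ g)
      (fun _ => 0) (-Real.pi, -Real.pi) (Real.pi, Real.pi) hle hg.continuous.continuousOn
      continuousOn_const (fun x _ => hd x) (fun x _ => hasFDerivAt_const _ _)
      (ContinuousOn.integrableOn_compact isCompact_Icc (by fun_prop))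
    simpa [hp1] using this
  · have := integral_divergence_prod_Icc_of_hasFDerivAt_of_le (fun _ => 0) g (fun _ => 0)
      (fderiv ℝ g) (-Real.pi, -Real.pi) (Real.pi, Real.pi) hle continuousOn_const
      hg.continuous.continuousOn (fun x _ => hasFDerivAt_const _ _) (fun x _ => hd x)
      (ContinuousOn.integrableOn_compact isCompact_Icc (by fun_prop))
    simpa [hp2] using this

def kc (j : Fin 2) (k : Z2) : ℝ := if j = 0 then (k.1 : ℝ) else (k.2 : ℝ)

lemma pd_contDiff (j : Fin 2) {g : ℝ × ℝ → ℂ} (hg : ContDiff ℝ (⊤ : ℕ∞) g) :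
    ContDiff ℝ (⊤ : ℕ∞) (pd j g) := by
  unfold pd dirD
  exact (hg.fderiv_right (m := (⊤ : ℕ∞)) (by simp)).clm_apply contDiff_const

lemma pd_periodic (j : Fin 2) {g : ℝ × ℝ → ℂ} (hp : Periodic2 g) : Periodic2 (pd j g) := by
  have h1 : ∀ x : ℝ × ℝ, g (x + (2 * Real.pi, 0)) = g x := fun x => by
    rw [← (hp x).1]; congr 1; ext <;> simp
  have h2 : ∀ x : ℝ × ℝ, g (x + (0, 2 * Real.pi)) = g x := fun x => by
    rw [← (hp x).2]; congr 1; ext <;> simp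
  intro x
  unfold pd dirD
  constructor
  · congr 1
    have := fderiv_comp_add_right (𝕜 := ℝ) (f := g) (x := x) (2 * Real.pi, 0)
    simp only [h1] at this
    rw [this]; congr 1; ext <;> simp
  · congr 1
    have := fderiv_comp_add_right (𝕜 := ℝ) (f := g) (x := x) (0, 2 * Real.pi)
    simp only [h2] at this
    rw [this]; congr 1; ext <;> simp

lemma fCoeff_pd (j : Fin 2) (g : ℝ × ℝ → ℂ) (hg : ContDiff ℝ (⊤ : ℕ∞) g) (hp : Periodic2 g) (k : Z2) :
    fCoeff (pd j g) k = Complex.I * (kc j k : ℝ) * fCoeff g k := by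
  have hE := contDiff_ex (-k)
  have key := integral_pd_zero j (fun x => g x * Complex.exp (Complex.I * (dotZ (-k) x : ℝ)))
    (hg.mul hE) (fun x => by
      constructor
      · simp only [ex_per1, (hp x).1]
      · simp only [ex_per2, (hp x).2])
  have hpd : ∀ x, pd j (fun x => g x * Complex.exp (Complex.I * (dotZ (-k) x : ℝ))) x
      = pd j g x * Complex.exp (Complex.I * (dotZ (-k) x : ℝ))
        - Complex.I * (kc j k : ℝ) * (g x * Complex.exp (Complex.I * (dotZ (-k) x : ℝ))) := by
    intro x
    have h := ((hg.differentiable (by simp) x).hasFDerivAt).mul (hasFDerivAt_ex (-k) x)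
    unfold pd dirD
    have h' := h.fderiv
    simp only [Pi.mul_def] at h'
    rw [h']
    fin_cases j <;> simp [dotL_apply, dotZ, kc] <;> ring
  simp only [hpd] at key
  have hi1 : Integrable (fun x => pd j g x * Complex.exp (Complex.I * (dotZ (-k) x : ℝ)))
      (volume.restrict Q2) :=
    ContinuousOn.integrableOn_compact isCompact_Icc
      ((pd_contDiff j hg).continuous.mul hE.continuous).continuousOn
  have hi2 : Integrable (fun x => g x * Complex.exp (Complex.I * (dotZ (-k) x : ℝ)))
      (volume.restrict Q2) :=
    ContinuousOn.integrableOn_compact isCompact_Icc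
      (hg.continuous.mul hE.continuous).continuousOn
  rw [integral_sub hi1 (hi2.const_mul _), integral_const_mul, sub_eq_zero] at key
  unfold fCoeff
  simp only [nex_eq]
  rw [key]; ring

lemma fCoeff_sub (f g : ℝ × ℝ → ℂ) (hf : Continuous f) (hg : Continuous g) (k : Z2) :
    fCoeff (fun x => f x - g x) k = fCoeff f k - fCoeff g k := by
  have hE := (contDiff_ex (-k)).continuous
  unfold fCoeff
  simp only [nex_eq, sub_mul]
  rw [integral_sub, mul_sub]
  · exact ContinuousOn.integrableOn_compact isCompact_Icc (hf.mul hE).continuousOn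
  · exact ContinuousOn.integrableOn_compact isCompact_Icc (hg.mul hE).continuousOn

lemma fCoeff_bdd (f : ℝ × ℝ → ℂ) : ∃ C, ∀ k, ‖fCoeff f k‖ ≤ C := by
  refine ⟨‖(1 / (2 * Real.pi) ^ 2 : ℂ)‖ * ∫ x in Q2, ‖f x‖, fun k => ?_⟩
  unfold fCoeff
  rw [norm_mul]
  gcongr
  refine (norm_integral_le_integral_norm _).trans (le_of_eq ?_)
  simp only [nex_eq, norm_mul, norm_ex, mul_one]

def Dop (j : Fin 2) (f : ℝ × ℝ → ℂ) : ℝ × ℝ → ℂ := fun x => f x - pd j (pd j f) x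

lemma Dop_contDiff (j : Fin 2) {g : ℝ × ℝ → ℂ} (hg : ContDiff ℝ (⊤ : ℕ∞) g) :
    ContDiff ℝ (⊤ : ℕ∞) (Dop j g) := hg.sub (pd_contDiff j (pd_contDiff j hg))

lemma Dop_periodic (j : Fin 2) {g : ℝ × ℝ → ℂ} (hp : Periodic2 g) : Periodic2 (Dop j g) := by
  intro x
  have := pd_periodic j (pd_periodic j hp) x
  simp only [Dop, (hp x).1, (hp x).2, this.1, this.2, and_self]

lemma fCoeff_Dop (j : Fin 2) (g : ℝ × ℝ → ℂ) (hg : ContDiff ℝ (⊤ : ℕ∞) g) (hp : Periodic2 g) (k : Z2) :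
    fCoeff (Dop j g) k = ((1 + (kc j k) ^ 2 : ℝ) : ℂ) * fCoeff g k := by
  unfold Dop
  rw [fCoeff_sub _ _ hg.continuous (pd_contDiff j (pd_contDiff j hg)).continuous,
    fCoeff_pd j _ (pd_contDiff j hg) (pd_periodic j hp), fCoeff_pd j _ hg hp]
  push_cast
  linear_combination (-(kc j k : ℂ) ^ 2 * fCoeff g k) * Complex.I_sq

lemma wt_pow_bdd (n : ℕ) : ∀ (g : ℝ × ℝ → ℂ) (_ : ContDiff ℝ (⊤ : ℕ∞) g) (_ : Periodic2 g),
    ∃ C, ∀ k, wt k ^ n * ‖fCoeff g k‖ ≤ C := by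
  induction n with
  | zero => intro g _ _; simpa using fCoeff_bdd g
  | succ n ih =>
    intro g hg hp
    obtain ⟨C, hC⟩ := ih (Dop 0 (Dop 1 g)) (Dop_contDiff 0 (Dop_contDiff 1 hg))
      (Dop_periodic 0 (Dop_periodic 1 hp))
    refine ⟨C, fun k => (le_of_eq ?_).trans (hC k)⟩
    rw [fCoeff_Dop 0 _ (Dop_contDiff 1 hg) (Dop_periodic 1 hp), fCoeff_Dop 1 _ hg hp, norm_mul,
      norm_mul, Complex.norm_real, Complex.norm_real, Real.norm_of_nonneg (by positivity),
      Real.norm_of_nonneg (by positivity)]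
    simp only [kc, wt]
    simp only [if_true, one_ne_zero, if_false]
    ring

lemma rapid_fCoeff (g : ℝ × ℝ → ℂ) (hg : ContDiff ℝ (⊤ : ℕ∞) g) (hp : Periodic2 g) :
    Rapid (fCoeff g) := by
  intro n
  obtain ⟨C, hC⟩ := wt_pow_bdd (n + 1) g hg hp
  refine Summable.of_nonneg_of_le (fun k => ?_) (fun k => ?_) (summable_inv_wt.mul_left C)
  · have := wt_ge_one k
    positivity
  · have := wt_ge_one k
    rw [← div_eq_mul_inv, le_div_iff₀ (by linarith)]
    refine (le_of_eq ?_).trans (hC k)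
    ring

lemma per_int {g : ℝ × ℝ → ℂ} (hp : Periodic2 g) (x y : ℝ) (m n : ℤ) :
    g (x + m * (2 * Real.pi), y + n * (2 * Real.pi)) = g (x, y) := by
  have h1 : ∀ y, Function.Periodic (fun x => g (x, y)) (2 * Real.pi) := fun y x => (hp (x, y)).1
  have h2 : ∀ x, Function.Periodic (fun y => g (x, y)) (2 * Real.pi) := fun x y => (hp (x, y)).2
  exact ((h1 _).int_mul m x).trans ((h2 _).int_mul n y)

lemma torus_lift (g : ℝ × ℝ → ℂ) (hc : Continuous g) (hp : Periodic2 g) :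
    ∃ f : C(UnitAddTorus (Fin 2), ℂ), ∀ t : Fin 2 → ℝ,
      f (fun i => (t i : UnitAddCircle)) = g (2 * Real.pi * t 0, 2 * Real.pi * t 1) := by
  let π0 : (Fin 2 → ℝ) → UnitAddTorus (Fin 2) := Pi.map fun _ => ((↑) : ℝ → UnitAddCircle)
  have hπ : IsOpenQuotientMap π0 := IsOpenQuotientMap.piMap fun _ =>
    QuotientAddGroup.isOpenQuotientMap_mk
  let G : (Fin 2 → ℝ) → ℂ := fun t => g (2 * Real.pi * t 0, 2 * Real.pi * t 1)
  have hG : Continuous G := by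
    apply hc.comp; fun_prop
  have hcomp : ∀ s t, π0 s = π0 t → G s = G t := by
    intro s t h
    have h0 := congrFun h 0
    have h1 := congrFun h 1
    simp only [π0, Pi.map_apply] at h0 h1
    have h0' : ((s 0 - t 0 : ℝ) : UnitAddCircle) = 0 := by rw [AddCircle.coe_sub, h0, sub_self]
    have h1' : ((s 1 - t 1 : ℝ) : UnitAddCircle) = 0 := by rw [AddCircle.coe_sub, h1, sub_self]
    obtain ⟨m, hm⟩ := AddCircle.coe_eq_zero_iff (p := (1 : ℝ)) |>.mp h0'
    obtain ⟨n, hn⟩ := AddCircle.coe_eq_zero_iff (p := (1 : ℝ)) |>.mp h1'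
    simp only [zsmul_eq_mul, mul_one] at hm hn
    simp only [G]
    rw [← per_int hp (2 * Real.pi * t 0) (2 * Real.pi * t 1) m n, hm, hn]
    congr 2 <;> ring
  let F : UnitAddTorus (Fin 2) → ℂ := fun x => G (Function.surjInv hπ.surjective x)
  have hF : ∀ t, F (π0 t) = G t := fun t => hcomp _ _ (Function.surjInv_eq hπ.surjective _)
  refine ⟨⟨F, ?_⟩, fun t => hF t⟩
  rw [← hπ.continuous_comp_iff]
  exact hG.congr fun t => (hF t).symm

lemma mF_eq (n : Fin 2 → ℤ) (t : Fin 2 → ℝ) :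
    UnitAddTorus.mFourier n (fun i => (t i : UnitAddCircle)) =
      Complex.exp (Complex.I * (dotZ (n 0, n 1) (2 * Real.pi * t 0, 2 * Real.pi * t 1) : ℝ)) := by
  simp only [UnitAddTorus.mFourier, ContinuousMap.coe_mk, Fin.prod_univ_two, fourier_coe_apply,
    ← Complex.exp_add, dotZ]
  congr 1
  push_cast
  ring

open scoped Pointwise in
lemma torus_integral (G : ℝ × ℝ → ℂ) :
    ∫ (x : Fin 2 → ℝ) in {x : Fin 2 → ℝ | ∀ i, x i ∈ Set.Ioc ((fun _ => -(1/2) : Fin 2 → ℝ) i) ((fun _ => -(1/2) : Fin 2 → ℝ) i + 1)},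
      G (2 * Real.pi * x 0, 2 * Real.pi * x 1)
    = (1 / (2 * Real.pi) ^ 2 : ℂ) * ∫ x in Q2, G x := by
  have h1 := (volume_preserving_finTwoArrow ℝ).setIntegral_preimage_emb
    (MeasurableEquiv.measurableEmbedding _) (fun y : ℝ × ℝ => G ((2 * Real.pi) • y))
    (Set.Ioc (-(1/2)) (1/2) ×ˢ Set.Ioc (-(1/2)) (1/2))
  have hset : ⇑(MeasurableEquiv.finTwoArrow (α := ℝ)) ⁻¹' (Set.Ioc (-(1/2)) (1/2) ×ˢ Set.Ioc (-(1/2)) (1/2))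
      = {x : Fin 2 → ℝ | ∀ i, x i ∈ Set.Ioc ((fun _ => -(1/2) : Fin 2 → ℝ) i) ((fun _ => -(1/2) : Fin 2 → ℝ) i + 1)} := by
    ext x
    simp only [Set.mem_preimage, Set.mem_prod, Set.mem_ofPred_eq, Fin.forall_fin_two]
    norm_num [MeasurableEquiv.finTwoArrow, MeasurableEquiv.piFinTwo]
  rw [hset] at h1
  have hpi := Real.pi_pos
  have h2 := Measure.setIntegral_comp_smul_of_pos (volume : Measure (ℝ × ℝ)) G
    (Set.Ioc (-(1/2)) (1/2) ×ˢ Set.Ioc (-(1/2)) (1/2)) (R := 2 * Real.pi) (by positivity)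
  have hset2 : (2 * Real.pi) • (Set.Ioc (-(1/2) : ℝ) (1/2) ×ˢ Set.Ioc (-(1/2) : ℝ) (1/2))
      = Set.Ioc (-Real.pi) Real.pi ×ˢ Set.Ioc (-Real.pi) Real.pi := by
    ext x
    rw [Set.mem_smul_set_iff_inv_smul_mem₀ (by positivity)]
    simp only [Set.mem_prod, Set.mem_Ioc, Prod.smul_fst, Prod.smul_snd, smul_eq_mul,
      ← div_eq_inv_mul]
    have hp2 : 0 < 2 * Real.pi := by positivity
    rw [lt_div_iff₀ hp2, lt_div_iff₀ hp2, div_le_iff₀ hp2, div_le_iff₀ hp2]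
    ring_nf
  have hae : (Set.Ioc (-Real.pi) Real.pi ×ˢ Set.Ioc (-Real.pi) Real.pi : Set (ℝ × ℝ))
      =ᵐ[volume] Q2 := by
    rw [Q2, ← Set.Icc_prod_Icc]
    exact Measure.set_prod_ae_eq Ioc_ae_eq_Icc Ioc_ae_eq_Icc
  rw [hset2, setIntegral_congr_set hae] at h2
  rw [h2] at h1
  refine Eq.trans ?_ (h1.trans ?_)
  · rfl
  · simp

lemma mcoeff_eq (g : ℝ × ℝ → ℂ) (f : C(UnitAddTorus (Fin 2), ℂ))
    (hf : ∀ t : Fin 2 → ℝ,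
      f (fun i => (t i : UnitAddCircle)) = g (2 * Real.pi * t 0, 2 * Real.pi * t 1))
    (n : Fin 2 → ℤ) : UnitAddTorus.mFourierCoeff f n = fCoeff g (n 0, n 1) := by
  rw [UnitAddTorus.mFourierCoeff_eq_integral f n (fun _ => -(1/2)), fCoeff,
    ← torus_integral (fun x => g x * Complex.exp (-Complex.I * (dotZ (n 0, n 1) x : ℝ)))]
  congr 1
  funext t
  rw [hf, mF_eq, smul_eq_mul, mul_comm, nex_eq]
  rfl

lemma inversion (g : ℝ × ℝ → ℂ) (hg : ContDiff ℝ (⊤ : ℕ∞) g) (hp : Periodic2 g) :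
    g = FS (fCoeff g) := by
  obtain ⟨f, hf⟩ := torus_lift g hg.continuous hp
  have hco := mcoeff_eq g f hf
  have hr := rapid_fCoeff g hg hp
  let e : (Fin 2 → ℤ) ≃ Z2 := finTwoArrowEquiv ℤ
  have hs0 : Summable (fCoeff g) := Summable.of_norm ((hr 0).congr fun k => by simp)
  have hs : Summable (UnitAddTorus.mFourierCoeff f) := by
    refine (e.summable_iff.mpr hs0).congr fun n => ?_
    rw [hco]; rfl
  funext x
  have h := UnitAddTorus.hasSum_mFourier_series_apply_of_summable hs
    (fun i => ((![x.1 / (2 * Real.pi), x.2 / (2 * Real.pi)] i : ℝ) : UnitAddCircle))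
  have hpi : (2 * Real.pi) ≠ 0 := by positivity
  have hx : (2 * Real.pi * (![x.1 / (2 * Real.pi), x.2 / (2 * Real.pi)] : Fin 2 → ℝ) 0,
      2 * Real.pi * (![x.1 / (2 * Real.pi), x.2 / (2 * Real.pi)] : Fin 2 → ℝ) 1) = x := by
    ext <;> simp <;> field_simp
  rw [hf, hx] at h
  have h' : HasSum ((fun k => fCoeff g k * Complex.exp (Complex.I * (dotZ k x : ℝ))) ∘ e) (g x) := by
    refine (hs_congr fun n => ?_).mp h
    rw [hco, mF_eq, hx, smul_eq_mul]; rfl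
  exact (e.hasSum_iff.mp h').tsum_eq.symm

lemma RoSym_zero (j : Fin 2) : RoSym j 0 = 0 := by simp [RoSym]

lemma den_pos {k : Z2} (hk : k ≠ 0) : 0 < (k.1 : ℝ) ^ 2 + (k.2 : ℝ) ^ 2 := by
  by_cases h : k.1 = 0
  · have h2 : k.2 ≠ 0 := fun h2 => hk (Prod.ext h h2)
    positivity
  · positivity

lemma RoSym_bdd (j : Fin 2) (k : Z2) : |RoSym j k| ≤ 5 := by
  by_cases hk : k = 0
  · subst hk; simp [RoSym]
  have hd := den_pos hk
  have h1 : |((k.2 : ℝ) ^ 2 - (k.1 : ℝ) ^ 2) / ((k.1 : ℝ) ^ 2 + (k.2 : ℝ) ^ 2)| ≤ 1 := by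
    rw [abs_div, abs_of_pos hd, div_le_one hd, abs_le]
    constructor <;> nlinarith [sq_nonneg (k.1 : ℝ), sq_nonneg (k.2 : ℝ)]
  have h2 : |(k.1 : ℝ) * (k.2 : ℝ) / ((k.1 : ℝ) ^ 2 + (k.2 : ℝ) ^ 2)| ≤ 1 := by
    rw [abs_div, abs_of_pos hd, div_le_one hd, abs_le]
    constructor <;> nlinarith [sq_nonneg ((k.1 : ℝ) - k.2), sq_nonneg ((k.1 : ℝ) + k.2)]
  rw [abs_le] at h1 h2 ⊢
  simp only [RoSym, hk, if_false]
  split_ifs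
  · have : 25 * ((k.2 : ℝ) ^ 2 - (k.1 : ℝ) ^ 2) / (12 * ((k.1 : ℝ) ^ 2 + (k.2 : ℝ) ^ 2))
      = 25 / 12 * (((k.2 : ℝ) ^ 2 - (k.1 : ℝ) ^ 2) / ((k.1 : ℝ) ^ 2 + (k.2 : ℝ) ^ 2)) := by
      field_simp
    rw [this]; constructor <;> linarith
  · have : 7 * ((k.2 : ℝ) ^ 2 - (k.1 : ℝ) ^ 2) / (12 * ((k.1 : ℝ) ^ 2 + (k.2 : ℝ) ^ 2))
      + 4 * (k.1 : ℝ) * (k.2 : ℝ) / ((k.1 : ℝ) ^ 2 + (k.2 : ℝ) ^ 2)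
      = 7 / 12 * (((k.2 : ℝ) ^ 2 - (k.1 : ℝ) ^ 2) / ((k.1 : ℝ) ^ 2 + (k.2 : ℝ) ^ 2))
        + 4 * ((k.1 : ℝ) * (k.2 : ℝ) / ((k.1 : ℝ) ^ 2 + (k.2 : ℝ) ^ 2)) := by
      field_simp
    rw [this]; constructor <;> linarith

/-- symbol of the pressure -/
def pSym (k : Z2) : ℝ :=
  -((dotZ k l1) ^ 2 * RoSym 0 k + (k.1 : ℝ) ^ 2 * RoSym 1 k) / ((k.1 : ℝ) ^ 2 + (k.2 : ℝ) ^ 2)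

lemma pSym_bdd (k : Z2) : |pSym k| ≤ 10 := by
  by_cases hk : k = 0
  · subst hk; simp [pSym]
  have hd := den_pos hk
  have h0 := RoSym_bdd 0 k
  have h1 := RoSym_bdd 1 k
  rw [pSym, abs_div, abs_of_pos hd, div_le_iff₀ hd, abs_neg]
  have hl : (dotZ k l1) ^ 2 ≤ (k.1 : ℝ) ^ 2 + (k.2 : ℝ) ^ 2 := by
    simp only [dotZ, l1]
    nlinarith [sq_nonneg (4 / 5 * (k.1 : ℝ) - 3 / 5 * k.2)]
  have hk1 : (k.1 : ℝ) ^ 2 ≤ (k.1 : ℝ) ^ 2 + (k.2 : ℝ) ^ 2 := by nlinarith [sq_nonneg (k.2 : ℝ)]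
  calc _ ≤ |(dotZ k l1) ^ 2 * RoSym 0 k| + |(k.1 : ℝ) ^ 2 * RoSym 1 k| := abs_add_le _ _
    _ = (dotZ k l1) ^ 2 * |RoSym 0 k| + (k.1 : ℝ) ^ 2 * |RoSym 1 k| := by
        rw [abs_mul, abs_mul, abs_of_nonneg (sq_nonneg _), abs_of_nonneg (sq_nonneg (k.1 : ℝ))]
    _ ≤ ((k.1 : ℝ) ^ 2 + (k.2 : ℝ) ^ 2) * 5 + ((k.1 : ℝ) ^ 2 + (k.2 : ℝ) ^ 2) * 5 := by gcongr
    _ = _ := by ring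

lemma sym1 (k : Z2) : 4 / 5 * dotZ k l1 * RoSym 0 k + dotZ k (1, 0) = - (dotZ k (0, 1) * pSym k) := by
  by_cases hk : k = 0
  · subst hk; simp [dotZ, RoSym]
  have hd := (den_pos hk).ne'
  simp only [pSym, RoSym, hk, if_false, if_true, one_ne_zero, dotZ, l1]
  field_simp
  ring

lemma sym2 (k : Z2) : -(3 / 5) * dotZ k l1 * RoSym 0 k - dotZ k l2 * RoSym 1 k + dotZ k (0, 1)
    = dotZ k (1, 0) * pSym k := by
  by_cases hk : k = 0
  · subst hk; simp [dotZ, RoSym]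
  have hd := (den_pos hk).ne'
  simp only [pSym, RoSym, hk, if_false, if_true, one_ne_zero, dotZ, l1, l2]
  field_simp
  ring

/-- real part as a real-linear map into `ℂ` -/
def reL : ℂ →L[ℝ] ℂ := Complex.ofRealCLM.comp Complex.reCLM

lemma reL_apply (z : ℂ) : reL z = ((z.re : ℝ) : ℂ) := by simp [reL]

lemma dirD_reL (v : ℝ × ℝ) (f : ℝ × ℝ → ℂ) (hf : ContDiff ℝ (⊤ : ℕ∞) f) (x : ℝ × ℝ) :
    dirD v (fun y => reL (f y)) x = reL (dirD v f x) := by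
  have := (reL.hasFDerivAt (x := f x)).comp x (hf.differentiable (by simp) x).hasFDerivAt
  have h := this.fderiv
  simp only [Function.comp_def] at h
  simp only [dirD, h, ContinuousLinearMap.comp_apply]

lemma aPerf_sq (q : ℝ × ℝ → ℂ) (C₀ r lam : ℝ) (hC₀ : 2 ≤ C₀) (hr : 0 < r) (hlam : 0 < lam)
    (j : Fin 2) (hbound : ∀ x, ‖Ro j q x‖ ≤ r) (x : ℝ × ℝ) :
    (aPerf q r (5 * lam) C₀ j x) ^ 2 =
      ((4 / (5 * lam) : ℝ) : ℂ) * reL (Ro j q x) + ((4 * r * C₀ / (5 * lam) : ℝ) : ℂ) := by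
  have h1 : -r ≤ (Ro j q x).re := by
    have := (abs_le.mp ((Complex.abs_re_le_norm (Ro j q x)).trans (hbound x))).1
    exact this
  have h2 : 0 ≤ C₀ + (Ro j q x).re / r := by
    have : -1 ≤ (Ro j q x).re / r := by rw [le_div_iff₀ hr]; linarith
    linarith
  have h3 : 0 ≤ r / (5 * lam) := by positivity
  rw [aPerf, reL_apply, ← Complex.ofReal_pow, ← Complex.ofReal_mul, ← Complex.ofReal_add]
  congr 1
  rw [mul_pow, mul_pow, Real.sq_sqrt h2, Real.sq_sqrt h3]
  field_simp
  ring

lemma dirD_aPerf (q : ℝ × ℝ → ℂ) (C₀ r lam : ℝ) (hC₀ : 2 ≤ C₀) (hr : 0 < r) (hlam : 0 < lam)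
    (j : Fin 2) (hbound : ∀ x, ‖Ro j q x‖ ≤ r) (hf : ContDiff ℝ (⊤ : ℕ∞) (Ro j q)) (v x : ℝ × ℝ) :
    dirD v (fun y => (aPerf q r (5 * lam) C₀ j y) ^ 2) x =
      ((4 / (5 * lam) : ℝ) : ℂ) * reL (dirD v (Ro j q) x) := by
  simp only [aPerf_sq q C₀ r lam hC₀ hr hlam j hbound]
  rw [← dirD_reL v _ hf]
  have hd : DifferentiableAt ℝ (fun y => reL (Ro j q y)) x :=
    (reL.contDiff.comp hf).differentiable (n := (⊤ : ℕ∞)) (by simp) x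
  unfold dirD
  rw [fderiv_add_const, fderiv_const_mul hd]
  simp

/-- Proposition 3.3, matching: with
`a_j = 2√(r/(5λ)) √(C₀ + R_j^o(q)/r)`, one has
`−(1/4)(5λ) ∑_j l_j^⊥ (l_j·∇)(a_j²) + ∇q = ∇^⊥ p` for some smooth scalar `p`. -/
theorem stmt7 (q : ℝ × ℝ → ℂ) (hq : ContDiff ℝ (⊤ : ℕ∞) q) (hqp : Periodic2 q)
    (hqr : RealValued q) (hq0 : fCoeff q 0 = 0)
    (C₀ r lam : ℝ) (hC₀ : 2 ≤ C₀) (hr : 0 < r) (hlam : 0 < lam)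
    (hbound : ∀ j : Fin 2, ∀ x, ‖Ro j q x‖ ≤ r) :
    ∃ p : ℝ × ℝ → ℂ, ContDiff ℝ (⊤ : ℕ∞) p ∧ Periodic2 p ∧
      ∀ x : ℝ × ℝ,
        (-(1 / 4 : ℂ)) * ((5 * lam : ℝ) : ℂ) *
            (((perp l1).1 : ℂ) * dirD l1 (fun y => (aPerf q r (5 * lam) C₀ 0 y) ^ 2) x
              + ((perp l2).1 : ℂ) * dirD l2 (fun y => (aPerf q r (5 * lam) C₀ 1 y) ^ 2) x)
          + pd 0 q x = -(pd 1 p x) ∧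
        (-(1 / 4 : ℂ)) * ((5 * lam : ℝ) : ℂ) *
            (((perp l1).2 : ℂ) * dirD l1 (fun y => (aPerf q r (5 * lam) C₀ 0 y) ^ 2) x
              + ((perp l2).2 : ℂ) * dirD l2 (fun y => (aPerf q r (5 * lam) C₀ 1 y) ^ 2) x)
          + pd 1 q x = pd 0 p x := by
  have hc := rapid_fCoeff q hq hqp
  have hqFS := inversion q hq hqp
  have hR : ∀ j, Rapid (fun k => ((RoSym j k : ℝ) : ℂ) * fCoeff q k) := fun j =>
    hc.mul_bdd _ 5 0 fun k => by
      rw [Complex.norm_real, pow_zero, mul_one]; exact RoSym_bdd j k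
  have hP : Rapid (fun k => ((pSym k : ℝ) : ℂ) * fCoeff q k) :=
    hc.mul_bdd _ 10 0 fun k => by
      rw [Complex.norm_real, pow_zero, mul_one]; exact pSym_bdd k
  have hRo : ∀ j, Ro j q = FS (fun k => ((RoSym j k : ℝ) : ℂ) * fCoeff q k) := fun j => rfl
  have hRs : ∀ j, ContDiff ℝ (⊤ : ℕ∞) (Ro j q) := fun j => by rw [hRo]; exact (hR j).contDiff
  have hqre : (fun y => reL (q y)) = q := by
    funext y
    rw [reL_apply]
    exact Complex.ext (by simp) (by simp [hqr y])
  have hpdq : ∀ v x, dirD v q x = reL (dirD v q x) := fun v x => by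
    rw [← dirD_reL v q hq, hqre]
  set P := FS (fun k => ((pSym k : ℝ) : ℂ) * fCoeff q k) with hPdef
  have hq_sum : ∀ v x, HasSum (fun k => (Complex.I * (dotZ k v : ℝ)) * fCoeff q k
      * Complex.exp (Complex.I * (dotZ k x : ℝ))) (dirD v q x) := fun v x => by
    have := hc.hasSum_dirD v x
    rwa [← hqFS] at this
  have E1 : ∀ x, (4 / 5 : ℂ) * dirD l1 (Ro 0 q) x + dirD (1, 0) q x = - dirD (0, 1) P x := by
    intro x
    refine HasSum.unique ((((hR 0).hasSum_dirD l1 x).mul_left (4 / 5 : ℂ)).add (hq_sum (1, 0) x)) ?_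
    refine (hs_congr fun k => ?_).mp (hP.hasSum_dirD (0, 1) x).neg
    have h := congrArg (fun t : ℝ => (t : ℂ)) (sym1 k)
    push_cast at h
    linear_combination (-Complex.I * fCoeff q k * Complex.exp (Complex.I * (dotZ k x : ℝ))) * h
  have E2 : ∀ x, (-(3 / 5) : ℂ) * dirD l1 (Ro 0 q) x + (-1 : ℂ) * dirD l2 (Ro 1 q) x
      + dirD (0, 1) q x = dirD (1, 0) P x := by
    intro x
    refine HasSum.unique (((((hR 0).hasSum_dirD l1 x).mul_left (-(3 / 5) : ℂ)).add
      (((hR 1).hasSum_dirD l2 x).mul_left (-1 : ℂ))).add (hq_sum (0, 1) x)) ?_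
    refine (hs_congr fun k => ?_).mp (hP.hasSum_dirD (1, 0) x)
    have h := congrArg (fun t : ℝ => (t : ℂ)) (sym2 k)
    push_cast at h
    linear_combination (-Complex.I * fCoeff q k * Complex.exp (Complex.I * (dotZ k x : ℝ))) * h
  have hPs : ContDiff ℝ (⊤ : ℕ∞) P := hP.contDiff
  have hlam' : (lam : ℂ) ≠ 0 := by exact_mod_cast hlam.ne'
  refine ⟨fun y => reL (P y), reL.contDiff.comp hPs, fun x => ?_, fun x => ⟨?_, ?_⟩⟩
  · have := FS_periodic (fun k => ((pSym k : ℝ) : ℂ) * fCoeff q k) x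
    rw [← hPdef] at this
    simp only [this.1, this.2, and_self]
  · have h := congrArg Complex.re (E1 x)
    rw [dirD_aPerf q C₀ r lam hC₀ hr hlam 0 (hbound 0) (hRs 0),
      dirD_aPerf q C₀ r lam hC₀ hr hlam 1 (hbound 1) (hRs 1)]
    simp only [pd, if_true, one_ne_zero, if_false]
    rw [dirD_reL _ _ hPs, hpdq]
    simp only [reL_apply, perp]
    rw [show (4 / 5 : ℂ) = ((4 / 5 : ℝ) : ℂ) by push_cast; rfl] at h
    simp only [Complex.add_re, Complex.re_ofReal_mul, Complex.neg_re] at h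
    have h' := congrArg (fun t : ℝ => (t : ℂ)) h
    push_cast at h'
    simp only [l1, l2] at h' ⊢
    push_cast
    rw [← h']
    field_simp
    ring
  · have h := congrArg Complex.re (E2 x)
    rw [dirD_aPerf q C₀ r lam hC₀ hr hlam 0 (hbound 0) (hRs 0),
      dirD_aPerf q C₀ r lam hC₀ hr hlam 1 (hbound 1) (hRs 1)]
    simp only [pd, if_true, one_ne_zero, if_false]
    rw [dirD_reL _ _ hPs, hpdq]
    simp only [reL_apply, perp]
    rw [show (-(3 / 5) : ℂ) = ((-(3 / 5) : ℝ) : ℂ) by push_cast; rfl,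
      show (-1 : ℂ) = ((-1 : ℝ) : ℂ) by push_cast; rfl] at h
    simp only [Complex.add_re, Complex.re_ofReal_mul] at h
    have h' := congrArg (fun t : ℝ => (t : ℂ)) h
    push_cast at h'
    simp only [l1, l2] at h' ⊢
    push_cast
    rw [← h']
    field_simp
    ring

end
end

section
/- Let m : ℝ² ∖ {0} → ℂ be smooth and homogeneous of degree 0, and let R be the Fourier multiplier operator on 𝕋² with symbol m(k) for k ≠ 0 (annihilating the k = 0 mode). There is a constant C_m such that: if μ ≥ 10 and a : 𝕋² → ℝ has Fourier support contained in {|k| ≤ μ}, then ‖Ra‖_{L^∞(𝕋²)} ≤ C_m ‖a‖_{L^∞(𝕋²)} log μ. -/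
open MeasureTheory Complex Filter

noncomputable section

lemma aux_uniq1 (f : ℝ → ℂ) (hf : Continuous f) (hp : ∀ x, f (x + 2 * Real.pi) = f x)
    (h : ∀ n : ℤ, ∫ x in (-Real.pi)..Real.pi, f x * Complex.exp (-Complex.I * ((n * x : ℝ) : ℂ)) = 0) :
    ∀ x, f x = 0 := by
  have : Fact (0 < 2 * Real.pi) := ⟨Real.two_pi_pos⟩
  have hper : Function.Periodic f (2 * Real.pi) := hp
  have hc : Continuous (hper.lift) := by
    exact continuous_coinduced_dom.mpr hf
  let F : C(AddCircle (2 * Real.pi), ℂ) := ⟨hper.lift, hc⟩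
  have hcoef : fourierCoeff F = fun _ => 0 := by
    funext n
    rw [fourierCoeff_eq_intervalIntegral _ _ (-Real.pi)]
    have e : -Real.pi + 2 * Real.pi = Real.pi := by ring
    rw [e]
    have : ∀ x : ℝ, @fourier (2 * Real.pi) (-n) x • F x
        = f x * Complex.exp (-Complex.I * ((n * x : ℝ) : ℂ)) := by
      intro x
      rw [fourier_coe_apply, smul_eq_mul, mul_comm]
      have h1 : F (x : AddCircle (2 * Real.pi)) = f x := Function.Periodic.lift_coe hper x
      rw [h1]
      congr 2
      have : (Real.pi : ℂ) ≠ 0 := by exact_mod_cast Real.pi_ne_zero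
      push_cast
      field_simp
    simp_rw [this, h n, smul_zero]
  have hs : Summable (fourierCoeff F) := by rw [hcoef]; exact summable_zero
  intro x
  have := has_pointwise_sum_fourier_series_of_summable hs (x : AddCircle (2 * Real.pi))
  rw [hcoef] at this
  simp only [zero_smul] at this
  have h2 := this.unique hasSum_zero
  have h1 : F (x : AddCircle (2 * Real.pi)) = f x := Function.Periodic.lift_coe hper x
  rw [← h1, h2]

lemma aux_Q2 : Q2 = Set.Icc (-Real.pi) Real.pi ×ˢ Set.Icc (-Real.pi) Real.pi := by
  rw [Q2, Set.Icc_prod_eq]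

lemma aux_pi_le : -Real.pi ≤ Real.pi := by linarith [Real.pi_pos]

lemma aux_cont_int (f : ℝ × ℝ → ℂ) (hf : Continuous f) : IntegrableOn f Q2 := by
  rw [Q2]
  exact hf.continuousOn.integrableOn_compact isCompact_Icc

lemma aux_cont_dot (k : Z2) : Continuous (dotZ k) := by
  unfold dotZ; fun_prop

lemma aux_iter (f : ℝ × ℝ → ℂ) (hf : Continuous f) (k : Z2) :
    fCoeff f k = (1 / (2 * Real.pi) ^ 2 : ℂ) * ∫ x in (-Real.pi)..Real.pi,
      (∫ y in (-Real.pi)..Real.pi, f (x, y) * Complex.exp (-Complex.I * ((k.2 * y : ℝ) : ℂ)))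
        * Complex.exp (-Complex.I * ((k.1 * x : ℝ) : ℂ)) := by
  unfold fCoeff
  congr 1
  have hint : IntegrableOn (fun x => f x * Complex.exp (-Complex.I * (dotZ k x : ℝ))) Q2 := by
    apply aux_cont_int
    have := aux_cont_dot k
    fun_prop
  rw [aux_Q2] at hint ⊢
  rw [Measure.volume_eq_prod] at hint ⊢
  rw [setIntegral_prod _ hint]
  rw [intervalIntegral.integral_of_le aux_pi_le, ← integral_Icc_eq_integral_Ioc]
  congr 1
  funext x
  rw [intervalIntegral.integral_of_le aux_pi_le, ← integral_Icc_eq_integral_Ioc,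
    ← integral_mul_const]
  congr 1
  funext y
  rw [mul_assoc, ← Complex.exp_add]
  congr 2
  simp only [dotZ]
  push_cast
  ring

lemma aux_uniq2 (f : ℝ × ℝ → ℂ) (hf : Continuous f) (hp : Periodic2 f)
    (h : ∀ k, fCoeff f k = 0) : ∀ x, f x = 0 := by
  have hpi : (1 / (2 * Real.pi) ^ 2 : ℂ) ≠ 0 := by
    have : (Real.pi : ℂ) ≠ 0 := by exact_mod_cast Real.pi_ne_zero
    simp [this]
  have step : ∀ (n : ℤ) (x : ℝ),
      ∫ y in (-Real.pi)..Real.pi, f (x, y) * Complex.exp (-Complex.I * ((n * y : ℝ) : ℂ)) = 0 := by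
    intro n
    apply aux_uniq1 (fun x => ∫ y in (-Real.pi)..Real.pi,
      f (x, y) * Complex.exp (-Complex.I * ((n * y : ℝ) : ℂ)))
    · apply intervalIntegral.continuous_parametric_intervalIntegral_of_continuous'
      unfold Function.uncurry
      fun_prop
    · intro x
      congr 1
      funext y
      rw [(hp (x, y)).1]
    · intro l
      have := h (l, n)
      rw [aux_iter f hf] at this
      exact (mul_eq_zero.mp this).resolve_left hpi
  rintro ⟨x, y⟩
  refine aux_uniq1 (fun y => f (x, y)) (by fun_prop) (fun y => (hp (x, y)).2) (fun n => step n x) y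

lemma aux_int_exp (n : ℤ) : ∫ x in (-Real.pi)..Real.pi, Complex.exp (Complex.I * ((n * x : ℝ) : ℂ))
    = if n = 0 then 2 * (Real.pi : ℂ) else 0 := by
  split_ifs with hn
  · subst hn
    simp
    ring
  · have hc : Complex.I * (n : ℂ) ≠ 0 := mul_ne_zero Complex.I_ne_zero (by exact_mod_cast hn)
    have := integral_exp_mul_complex (a := -Real.pi) (b := Real.pi) hc
    have e : ∀ x : ℝ, Complex.exp (Complex.I * ((n * x : ℝ) : ℂ)) = Complex.exp (Complex.I * n * x) := by
      intro x; push_cast; ring_nf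
    simp_rw [e]
    rw [this]
    have : Complex.exp (Complex.I * n * (Real.pi : ℝ)) = Complex.exp (Complex.I * n * (-Real.pi : ℝ)) := by
      rw [Complex.exp_eq_exp_iff_exists_int]
      exact ⟨n, by push_cast; ring⟩
    rw [this, sub_self, zero_div]

lemma aux_fCoeff_exp (l k : Z2) :
    fCoeff (fun x => Complex.exp (Complex.I * (dotZ l x : ℝ))) k = if k = l then 1 else 0 := by
  have hpi : (Real.pi : ℂ) ≠ 0 := by exact_mod_cast Real.pi_ne_zero
  have hc := aux_cont_dot l
  rw [aux_iter _ (by fun_prop)]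
  have e1 : ∀ x y : ℝ, Complex.exp (Complex.I * (dotZ l (x, y) : ℝ))
      * Complex.exp (-Complex.I * ((k.2 * y : ℝ) : ℂ)) =
      Complex.exp (Complex.I * ((l.1 * x : ℝ) : ℂ)) *
        Complex.exp (Complex.I * (((l.2 - k.2 : ℤ) * y : ℝ) : ℂ)) := by
    intro x y
    rw [← Complex.exp_add, ← Complex.exp_add]
    congr 1
    simp only [dotZ]
    push_cast
    ring
  simp_rw [e1, intervalIntegral.integral_const_mul, aux_int_exp]
  have e2 : ∀ (x : ℝ) (c : ℂ), Complex.exp (Complex.I * ((l.1 * x : ℝ) : ℂ)) * c *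
      Complex.exp (-Complex.I * ((k.1 * x : ℝ) : ℂ)) =
      c * Complex.exp (Complex.I * (((l.1 - k.1 : ℤ) * x : ℝ) : ℂ)) := by
    intro x c
    rw [mul_comm _ c, mul_assoc, ← Complex.exp_add]
    congr 2
    push_cast
    ring
  simp_rw [e2, intervalIntegral.integral_const_mul, aux_int_exp]
  by_cases h1 : k.1 = l.1 <;> by_cases h2 : k.2 = l.2
  · have : k = l := Prod.ext h1 h2
    simp [this]
    field_simp
  · have h2' : ¬ l.2 = k.2 := fun h => h2 h.symm
    simp [Prod.ext_iff, h2, h2', sub_eq_zero]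
  · have h1' : ¬ l.1 = k.1 := fun h => h1 h.symm
    simp [Prod.ext_iff, h1, h1', sub_eq_zero]
  · have h1' : ¬ l.1 = k.1 := fun h => h1 h.symm
    simp [Prod.ext_iff, h1, h1', sub_eq_zero]

lemma aux_exp_per (k : Z2) : Periodic2 (fun x => Complex.exp (Complex.I * (dotZ k x : ℝ))) := by
  intro x
  constructor
  · simp only [dotZ]
    rw [Complex.exp_eq_exp_iff_exists_int]
    exact ⟨k.1, by push_cast; ring⟩
  · simp only [dotZ]
    rw [Complex.exp_eq_exp_iff_exists_int]
    exact ⟨k.2, by push_cast; ring⟩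

lemma aux_inversion (a : ℝ × ℝ → ℂ) (ha : Continuous a) (hp : Periodic2 a) (S : Finset Z2)
    (hS : ∀ k ∉ S, fCoeff a k = 0) (x : ℝ × ℝ) :
    a x = ∑ k ∈ S, fCoeff a k * Complex.exp (Complex.I * (dotZ k x : ℝ)) := by
  set p : ℝ × ℝ → ℂ := fun x => ∑ k ∈ S, fCoeff a k * Complex.exp (Complex.I * (dotZ k x : ℝ)) with hpdef
  have hcp : Continuous p := by
    apply continuous_finsetSum
    intro k _
    have := aux_cont_dot k
    fun_prop
  have key : ∀ x, a x - p x = 0 := by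
    apply aux_uniq2 (fun x => a x - p x) (ha.sub hcp)
    · intro x
      have e : ∀ k, _ := fun k => aux_exp_per k x
      simp only at e
      simp only [hpdef, (hp x).1, (hp x).2, fun k => (e k).1, fun k => (e k).2, and_self]
    · intro k
      have hI : ∀ g : ℝ × ℝ → ℂ, Continuous g →
          IntegrableOn (fun x => g x * Complex.exp (-Complex.I * (dotZ k x : ℝ))) Q2 := by
        intro g hg
        apply aux_cont_int
        have := aux_cont_dot k
        fun_prop
      have h1 : fCoeff (fun x => a x - p x) k = fCoeff a k - fCoeff p k := by
        unfold fCoeff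
        simp_rw [sub_mul]
        rw [integral_sub (hI a ha) (hI p hcp), mul_sub]
      have h2 : fCoeff p k = ∑ l ∈ S, fCoeff a l *
          fCoeff (fun x => Complex.exp (Complex.I * (dotZ l x : ℝ))) k := by
        conv_lhs => unfold fCoeff
        simp only [hpdef, Finset.sum_mul]
        rw [integral_finsetSum]
        · rw [Finset.mul_sum]
          refine Finset.sum_congr rfl fun l _ => ?_
          conv_rhs => rw [fCoeff.eq_def (fun x => Complex.exp (Complex.I * (dotZ l x : ℝ))) k]
          simp_rw [mul_assoc]
          rw [integral_const_mul]
          ring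
        · intro l _
          apply hI (fun x => fCoeff a l * Complex.exp (Complex.I * (dotZ l x : ℝ)))
          have := aux_cont_dot l
          fun_prop
      rw [h1, h2]
      simp_rw [aux_fCoeff_exp]
      simp only [mul_ite, mul_one, mul_zero, Finset.sum_ite_eq]
      split_ifs with hk
      · simp
      · simp [hS k hk]
  exact sub_eq_zero.mp (key x)

abbrev EE := EuclideanSpace ℝ (Fin 2)

def vecZ (k : Z2) : EE := !₂[(k.1 : ℝ), (k.2 : ℝ)]

lemma aux_bdd (a : ℝ × ℝ → ℂ) (S : Finset Z2) (c : Z2 → ℂ)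
    (h : ∀ x, a x = ∑ k ∈ S, c k * Complex.exp (Complex.I * (dotZ k x : ℝ))) :
    ∀ x, ‖a x‖ ≤ supNorm a := by
  intro x
  apply le_ciSup (f := fun x => ‖a x‖) _ x
  refine ⟨∑ k ∈ S, ‖c k‖, ?_⟩
  rintro _ ⟨y, rfl⟩
  simp only
  rw [h y]
  refine (norm_sum_le _ _).trans (Finset.sum_le_sum fun k _ => ?_)
  rw [norm_mul, mul_comm Complex.I, Complex.norm_exp_ofReal_mul_I, mul_one]

lemma aux_mult (φ g : EE → ℂ) (hg : Integrable g)
    (hφ : ∀ w, φ w = ∫ v, Complex.exp (((2 * Real.pi * inner ℝ v w : ℝ) : ℂ) * Complex.I) • g v)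
    (a : ℝ × ℝ → ℂ) (S : Finset Z2) (c : Z2 → ℂ)
    (h : ∀ x, a x = ∑ k ∈ S, c k * Complex.exp (Complex.I * (dotZ k x : ℝ))) (t : ℝ) (x : ℝ × ℝ) :
    ‖∑ k ∈ S, φ (t • vecZ k) * c k * Complex.exp (Complex.I * (dotZ k x : ℝ))‖
      ≤ (∫ v, ‖g v‖) * supNorm a := by
  have hkey : ∑ k ∈ S, φ (t • vecZ k) * c k * Complex.exp (Complex.I * (dotZ k x : ℝ))
      = ∫ v, g v * a (x.1 + 2 * Real.pi * t * v 0, x.2 + 2 * Real.pi * t * v 1) := by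
    simp_rw [h, Finset.mul_sum]
    rw [integral_finsetSum]
    · refine Finset.sum_congr rfl fun k _ => ?_
      rw [hφ, mul_assoc, ← integral_mul_const]
      congr 1
      funext v
      rw [smul_eq_mul]
      have : Complex.exp (Complex.I * (dotZ k (x.1 + 2 * Real.pi * t * v 0, x.2 + 2 * Real.pi * t * v 1) : ℝ))
        = Complex.exp (((2 * Real.pi * inner ℝ v (t • vecZ k) : ℝ) : ℂ) * Complex.I) *
          Complex.exp (Complex.I * (dotZ k x : ℝ)) := by
        rw [← Complex.exp_add]
        congr 1
        simp [dotZ, vecZ, PiLp.inner_apply, Fin.sum_univ_two]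
        ring
      rw [this]
      ring
    · intro k _
      have h0 : Continuous fun v : EE => c k * Complex.exp (Complex.I *
          (dotZ k (x.1 + 2 * Real.pi * t * v 0, x.2 + 2 * Real.pi * t * v 1) : ℝ)) := by
        have := aux_cont_dot k
        fun_prop
      refine hg.mul_bdd (c := ‖c k‖) h0.aestronglyMeasurable (Eventually.of_forall fun v => ?_)
      rw [norm_mul, mul_comm Complex.I, Complex.norm_exp_ofReal_mul_I, mul_one]
  rw [hkey, ← integral_mul_const]
  refine norm_integral_le_of_norm_le (hg.norm.mul_const _) (Eventually.of_forall fun v => ?_)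
  rw [norm_mul]
  exact mul_le_mul_of_nonneg_left (aux_bdd a S c h _) (norm_nonneg _)

open FourierTransform in
lemma aux_symbol (φ : EE → ℂ) (h1 : HasCompactSupport φ) (h2 : ContDiff ℝ (⊤ : ℕ∞) φ) :
    ∃ g : EE → ℂ, Integrable g ∧
    ∀ w, φ w = ∫ v, Complex.exp (((2 * Real.pi * inner ℝ v w : ℝ) : ℂ) * Complex.I) • g v := by
  let f : SchwartzMap EE ℂ := h1.toSchwartzMap h2
  refine ⟨((𝓕 f : SchwartzMap EE ℂ) : EE → ℂ), (𝓕 f : SchwartzMap EE ℂ).integrable, fun w => ?_⟩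
  rw [← Real.fourierInv_eq', ← SchwartzMap.fourierInv_coe, FourierTransform.fourierInv_fourier_eq]
  rfl

lemma aux_phi (m : ℝ × ℝ → ℂ) (hm : ContDiffOn ℝ (⊤ : ℕ∞) m {x : ℝ × ℝ | x ≠ 0}) 
    (χ : ContDiffBump (0 : EE)) (hin : χ.rIn = 1) (hout : χ.rOut = 2) :
    HasCompactSupport (fun w : EE => ((χ w - χ ((2 : ℝ) • w) : ℝ) : ℂ) * m (w 0, w 1)) ∧
    ContDiff ℝ (⊤ : ℕ∞) (fun w : EE => ((χ w - χ ((2 : ℝ) • w) : ℝ) : ℂ) * m (w 0, w 1)) := by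
  constructor
  · apply HasCompactSupport.of_support_subset_isCompact (isCompact_closedBall (0 : EE) 2)
    intro w hw
    by_contra hcon
    apply hw
    have hn : 2 < ‖w‖ := by simpa using hcon
    have z1 : χ w = 0 := χ.zero_of_le_dist (by rw [hout, dist_zero_right]; exact hn.le)
    have z2 : χ ((2 : ℝ) • w) = 0 := χ.zero_of_le_dist (by
      rw [hout, dist_zero_right, norm_smul]; norm_num; linarith)
    simp [z1, z2]
  · rw [contDiff_iff_contDiffAt]
    intro w
    by_cases hw : w = 0
    · subst hw
      have : (fun w : EE => ((χ w - χ ((2 : ℝ) • w) : ℝ) : ℂ) * m (w 0, w 1)) =ᶠ[nhds 0] fun _ => 0 := by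
        filter_upwards [Metric.ball_mem_nhds (0 : EE) (show (0 : ℝ) < 1 / 2 by norm_num)] with v hv
        have hv' : ‖v‖ < 1 / 2 := by simpa using hv
        have z1 : χ v = 1 := χ.one_of_mem_closedBall (by
          rw [hin, mem_closedBall_zero_iff]; linarith)
        have z2 : χ ((2 : ℝ) • v) = 1 := χ.one_of_mem_closedBall (by
          rw [hin, mem_closedBall_zero_iff, norm_smul]; norm_num; linarith)
        simp [z1, z2]
      exact contDiffAt_const.congr_of_eventuallyEq this
    · have hne : ((w 0, w 1) : ℝ × ℝ) ≠ 0 := by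
        intro h
        apply hw
        ext i
        have a1 := congrArg Prod.fst h
        have a2 := congrArg Prod.snd h
        fin_cases i
        · simpa using a1
        · simpa using a2
      have hmw : ContDiffAt ℝ (⊤ : ℕ∞) m (w 0, w 1) :=
        hm.contDiffAt (isOpen_ne.mem_nhds hne)
      have hpr : ContDiffAt ℝ (⊤ : ℕ∞) (fun w : EE => ((w 0, w 1) : ℝ × ℝ)) w := by fun_prop
      have hcomp : ContDiffAt ℝ (⊤ : ℕ∞) (fun w : EE => m (w 0, w 1)) w := 
        ContDiffAt.comp w hmw hpr
      have hχ : ContDiff ℝ (⊤ : ℕ∞) (χ : EE → ℝ) := χ.contDiff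
      have hχ2 : ContDiff ℝ (⊤ : ℕ∞) (fun w : EE => χ ((2 : ℝ) • w)) := 
        hχ.comp (by fun_prop)
      have : ContDiff ℝ (⊤ : ℕ∞) (fun w : EE => ((χ w - χ ((2 : ℝ) • w) : ℝ) : ℂ)) :=
        Complex.ofRealCLM.contDiff.comp (hχ.sub hχ2)
      exact this.contDiffAt.mul hcomp

lemma aux_norm_vec (k : Z2) : ‖vecZ k‖ = knorm k := by
  simp [vecZ, knorm, EuclideanSpace.norm_eq, Fin.sum_univ_two]

lemma aux_knorm_ge (k : Z2) (hk : k ≠ 0) : 1 ≤ knorm k := by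
  unfold knorm
  rw [Real.one_le_sqrt]
  have : (1 : ℤ) ≤ k.1 ^ 2 + k.2 ^ 2 := by
    by_contra hcon
    have a1 : k.1 = 0 := by nlinarith [sq_nonneg k.1, sq_nonneg k.2]
    have a2 : k.2 = 0 := by nlinarith [sq_nonneg k.1, sq_nonneg k.2]
    exact hk (Prod.ext a1 a2)
  exact_mod_cast this

lemma aux_finite (μ : ℝ) : ∃ S : Finset Z2, ∀ k ∉ S, μ < knorm k := by
  refine ⟨Finset.Icc (-⌈μ⌉) ⌈μ⌉ ×ˢ Finset.Icc (-⌈μ⌉) ⌈μ⌉, fun k hk => ?_⟩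
  by_contra hcon
  push Not at hcon
  apply hk
  have b1 : |(k.1 : ℝ)| ≤ knorm k := Real.abs_le_sqrt (by nlinarith [sq_nonneg (k.2 : ℝ)])
  have b2 : |(k.2 : ℝ)| ≤ knorm k := Real.abs_le_sqrt (by nlinarith [sq_nonneg (k.1 : ℝ)])
  have hc := Int.le_ceil μ
  have c1 : |k.1| ≤ ⌈μ⌉ := by
    have : ((|k.1| : ℤ) : ℝ) ≤ ((⌈μ⌉ : ℤ) : ℝ) := by push_cast; linarith
    exact_mod_cast this
  have c2 : |k.2| ≤ ⌈μ⌉ := by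
    have : ((|k.2| : ℤ) : ℝ) ≤ ((⌈μ⌉ : ℤ) : ℝ) := by push_cast; linarith
    exact_mod_cast this
  rw [Finset.mem_product, Finset.mem_Icc, Finset.mem_Icc]
  exact ⟨abs_le.mp c1, abs_le.mp c2⟩

lemma aux_telescope (m : ℝ × ℝ → ℂ)
    (hhom : ∀ c : ℝ, 0 < c → ∀ x : ℝ × ℝ, x ≠ 0 → m (c * x.1, c * x.2) = m x)
    (χ : ContDiffBump (0 : EE)) (hin : χ.rIn = 1) (hout : χ.rOut = 2)
    (φ : EE → ℂ) (hφ : φ = fun w : EE => ((χ w - χ ((2 : ℝ) • w) : ℝ) : ℂ) * m (w 0, w 1))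
    (J : ℕ) (k : Z2) (hk : knorm k ≤ 2 ^ J) :
    (if k = 0 then 0 else m (toR k)) = ∑ j ∈ Finset.range (J + 1), φ (((2 : ℝ) ^ j)⁻¹ • vecZ k) := by
  have hone : ∀ v : EE, ‖v‖ ≤ 1 → χ v = 1 := fun v hv => χ.one_of_mem_closedBall (by
          rw [hin, mem_closedBall_zero_iff]; exact hv)
  split_ifs with h0
  · subst h0
    have : vecZ 0 = 0 := by
      rw [← norm_eq_zero, aux_norm_vec]; simp [knorm]
    symm
    apply Finset.sum_eq_zero
    intro j _
    simp [hφ, this]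
  · have hk1 := aux_knorm_ge k h0
    have hne : toR k ≠ 0 := by
      intro h
      apply h0
      have a1 := congrArg Prod.fst h
      have a2 := congrArg Prod.snd h
      simp [toR] at a1 a2
      exact Prod.ext a1 a2
    let G : ℕ → ℂ := fun j => ((χ ((2 * ((2 : ℝ) ^ j)⁻¹) • vecZ k) : ℝ) : ℂ)
    have hterm : ∀ j, φ (((2 : ℝ) ^ j)⁻¹ • vecZ k) = (G (j + 1) - G j) * m (toR k) := by
      intro j
      have e1 : 2 * ((2 : ℝ) ^ (j + 1))⁻¹ = ((2 : ℝ) ^ j)⁻¹ := by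
        rw [pow_succ]; field_simp
      have e2 := hhom (((2 : ℝ) ^ j)⁻¹) (by positivity) (toR k) hne
      simp only [hφ, G, e1, smul_smul]
      rw [← e2]
      simp [vecZ, toR]
    simp_rw [hterm]
    rw [← Finset.sum_mul, Finset.sum_range_sub]
    have g0 : G 0 = 0 := by
      have : χ ((2 * ((2 : ℝ) ^ 0)⁻¹) • vecZ k) = 0 := χ.zero_of_le_dist (by
        rw [hout, dist_zero_right, norm_smul, aux_norm_vec]; norm_num; linarith)
      simp only [G, this, Complex.ofReal_zero]
    have g1 : G (J + 1) = 1 := by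
      have : χ ((2 * ((2 : ℝ) ^ (J + 1))⁻¹) • vecZ k) = 1 := hone _ (by
        have e1 : 2 * ((2 : ℝ) ^ (J + 1))⁻¹ = ((2 : ℝ) ^ J)⁻¹ := by
          rw [pow_succ]; field_simp
        rw [e1, norm_smul, aux_norm_vec, Real.norm_of_nonneg (by positivity), inv_mul_le_iff₀ (by positivity)]
        simpa using hk)
      simp only [G, this, Complex.ofReal_one]
    rw [g0, g1]; ring

/-- Lemma A.1: if `m` is smooth away from the origin and homogeneous of degree 0,
and `R` is the multiplier with symbol `m(k)` (killing the mean), then for `μ ≥ 10` and `a`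
real-valued with Fourier support in `{|k| ≤ μ}`, `‖Ra‖_∞ ≤ C_m ‖a‖_∞ log μ`. -/
theorem stmt9 (m : ℝ × ℝ → ℂ)
    (hm : ContDiffOn ℝ (⊤ : ℕ∞) m {x : ℝ × ℝ | x ≠ 0})
    (hhom : ∀ c : ℝ, 0 < c → ∀ x : ℝ × ℝ, x ≠ 0 → m (c * x.1, c * x.2) = m x) :
    ∃ C : ℝ, ∀ μ : ℝ, 10 ≤ μ → ∀ a : ℝ × ℝ → ℂ,
      Continuous a → Periodic2 a → RealValued a →
      (∀ k : Z2, μ < knorm k → fCoeff a k = 0) →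
      ∀ x, ‖Tmult (fun k => if k = 0 then 0 else m (toR k)) a x‖ ≤ C * supNorm a * Real.log μ := by
  obtain ⟨χ, hin, hout⟩ : ∃ χ : ContDiffBump (0 : EE), χ.rIn = 1 ∧ χ.rOut = 2 :=
    ⟨⟨1, 2, by norm_num, by norm_num⟩, rfl, rfl⟩
  obtain ⟨hsupp, hsm⟩ := aux_phi m hm χ hin hout
  set φ : EE → ℂ := fun w : EE => ((χ w - χ ((2 : ℝ) • w) : ℝ) : ℂ) * m (w 0, w 1) with hφ
  obtain ⟨g, hg, hgφ⟩ := aux_symbol φ hsupp hsm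
  refine ⟨(∫ v, ‖g v‖) * (1 / Real.log 2 + 2), ?_⟩
  intro μ hμ a ha hp _ hspec x
  obtain ⟨S, hS⟩ := aux_finite μ
  have hS0 : ∀ k ∉ S, fCoeff a k = 0 := fun k hk => hspec k (hS k hk)
  have hinv := aux_inversion a ha hp S hS0
  set J := ⌈Real.logb 2 μ⌉₊ with hJ
  have hμJ : μ ≤ 2 ^ J := by
    have := Nat.le_ceil (Real.logb 2 μ)
    rw [Real.logb_le_iff_le_rpow (by norm_num) (by linarith)] at this
    rwa [Real.rpow_natCast] at this
  have hlog1 : 1 ≤ Real.log μ := by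
    rw [Real.le_log_iff_exp_le (by linarith)]
    linarith [Real.exp_one_lt_d9]
  have hJ2 : (J : ℝ) + 1 ≤ (1 / Real.log 2 + 2) * Real.log μ := by
    have := Nat.ceil_lt_add_one (Real.logb_nonneg (b := 2) (by norm_num) (show 1 ≤ μ by linarith))
    have e : Real.logb 2 μ = 1 / Real.log 2 * Real.log μ := by
      rw [Real.logb]; ring
    rw [← hJ, e] at this
    linarith
  have hT : Tmult (fun k => if k = 0 then 0 else m (toR k)) a x =
      ∑ j ∈ Finset.range (J + 1), ∑ k ∈ S, φ (((2 : ℝ) ^ j)⁻¹ • vecZ k) * fCoeff a k *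
        Complex.exp (Complex.I * (dotZ k x : ℝ)) := by
    unfold Tmult
    rw [tsum_eq_sum (s := S) (fun k hk => by rw [hS0 k hk]; ring), Finset.sum_comm]
    refine Finset.sum_congr rfl fun k _ => ?_
    by_cases hk : fCoeff a k = 0
    · simp [hk]
    · have hkμ : knorm k ≤ 2 ^ J := by
        by_contra hcon
        exact hk (hspec k (by linarith))
      beta_reduce
      rw [aux_telescope m hhom χ hin hout φ hφ J k hkμ, Finset.sum_mul, Finset.sum_mul]
  rw [hT]
  have hnn : 0 ≤ (∫ v, ‖g v‖) * supNorm a :=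
    mul_nonneg (integral_nonneg fun v => norm_nonneg _)
      ((norm_nonneg _).trans (aux_bdd a S _ hinv 0))
  calc _ ≤ ∑ j ∈ Finset.range (J + 1), (∫ v, ‖g v‖) * supNorm a :=
        (norm_sum_le _ _).trans (Finset.sum_le_sum fun j _ =>
          aux_mult φ g hg hgφ a S _ hinv _ x)
    _ = ((J : ℝ) + 1) * ((∫ v, ‖g v‖) * supNorm a) := by
        rw [Finset.sum_const, Finset.card_range, nsmul_eq_mul]; push_cast; ring
    _ ≤ ((1 / Real.log 2 + 2) * Real.log μ) * ((∫ v, ‖g v‖) * supNorm a) :=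
        mul_le_mul_of_nonneg_right hJ2 hnn
    _ = _ := by ring

end
end
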